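/- (Entropy stability of the EC flux with positive semi-definite dissipation.) Let D be a symmetric positive semi-definite 5×5 real matrix and let L, R be any two states with bottom values b_L, b_R. Then the dissipative flux F̂ := F̃₁(L,R) − ½·D·[V] satisfies [V]·F̂ − [ψ₁] + [Φ]⟨hBx⟩ − g[h·b·vx] + g[h·vx]⟨b⟩ = −½·[V]ᵀD[V] ≤ 0. -/

import Mathlib

open scoped BigOperators
noncomputable section
open Matrix

/-- A state of the 1D (x-split) shallow water MHD system together with
the bottom topography value `b`. -/
structure SWState where
  h : ℝ
  vx : ℝ
  vy : ℝ
  Bx : ℝ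
  By : ℝ
  b : ℝ

namespace SWMHD

/-- Mean `⟨a⟩ = (a_L + a_R)/2` of an expression in the state variables. -/
def amean (f : SWState → ℝ) (L R : SWState) : ℝ := (f L + f R) / 2

/-- Jump `[a] = a_R − a_L` of an expression in the state variables. -/
def ajump (f : SWState → ℝ) (L R : SWState) : ℝ := f R - f L

/-- Entropy variables `V`. -/
def entropyVars (g : ℝ) (U : SWState) : Fin 5 → ℝ :=
  ![g * (U.h + U.b) - (U.vx ^ 2 + U.vy ^ 2 + U.Bx ^ 2 + U.By ^ 2) / 2,
    U.vx, U.vy, U.Bx, U.By]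

/-- Jump of the entropy variables. -/
def vjump (g : ℝ) (L R : SWState) : Fin 5 → ℝ :=
  fun k => entropyVars g R k - entropyVars g L k

/-- Entropy potential `ψ₁ = ½ g h² vx`. -/
def psi1 (g : ℝ) (U : SWState) : ℝ := g * U.h ^ 2 * U.vx / 2

/-- `Φ = vx Bx + vy By`. -/
def Phi (U : SWState) : ℝ := U.vx * U.Bx + U.vy * U.By

/-- The physical flux `F₁` of the x-split system. -/
def physFlux (g : ℝ) (U : SWState) : Fin 5 → ℝ :=
  ![U.h * U.vx,
    U.h * U.vx ^ 2 - U.h * U.Bx ^ 2 + g * U.h ^ 2 / 2,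
    U.h * U.vx * U.vy - U.h * U.Bx * U.By,
    0,
    U.h * (U.vx * U.By - U.Bx * U.vy)]

/-- The physical entropy flux `q₁`. -/
def q1 (g : ℝ) (U : SWState) : ℝ :=
  ((U.vx ^ 2 + U.vy ^ 2 + U.Bx ^ 2 + U.By ^ 2) / 2 + g * U.h + g * U.b) * U.h * U.vx
    - U.h * U.Bx * (U.vx * U.Bx + U.vy * U.By)

/-- The entropy conservative (EC) two-point flux `F̃₁(L,R)`. -/
def ecFlux (g : ℝ) (L R : SWState) : Fin 5 → ℝ :=
  ![amean (fun U => U.h) L R * amean (fun U => U.vx) L R,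
    amean (fun U => U.h) L R * (amean (fun U => U.vx) L R) ^ 2
      + g / 2 * amean (fun U => U.h ^ 2) L R
      - amean (fun U => U.h * U.Bx) L R * amean (fun U => U.Bx) L R
      + g * (amean (fun U => U.h * U.b) L R
             - amean (fun U => U.h) L R * amean (fun U => U.b) L R),
    amean (fun U => U.h) L R * amean (fun U => U.vx) L R * amean (fun U => U.vy) L R
      - amean (fun U => U.h * U.Bx) L R * amean (fun U => U.By) L R,
    amean (fun U => U.h) L R * amean (fun U => U.vx) L R * amean (fun U => U.Bx) L R
      - amean (fun U => U.h * U.Bx) L R * amean (fun U => U.vx) L R,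
    amean (fun U => U.h) L R * amean (fun U => U.vx) L R * amean (fun U => U.By) L R
      - amean (fun U => U.h * U.Bx) L R * amean (fun U => U.vy) L R]

/-- The entropy conservation condition `[V]·F = [ψ₁] − [Φ]⟨hBx⟩ + g[h b vx] − g[h vx]⟨b⟩`
for a two-point numerical flux `F`. -/
def ecCondition (g : ℝ) (F : Fin 5 → ℝ) (L R : SWState) : Prop :=
  vjump g L R ⬝ᵥ F
    = ajump (psi1 g) L R
      - ajump Phi L R * amean (fun U => U.h * U.Bx) L R
      + g * ajump (fun U => U.h * U.b * U.vx) L R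
      - g * ajump (fun U => U.h * U.vx) L R * amean (fun U => U.b) L R

/-- The numerical entropy flux `q̃` built from a two-point flux value `F`. -/
def numEntropyFlux (g : ℝ) (F : Fin 5 → ℝ) (L R : SWState) : ℝ :=
  (fun k => (entropyVars g L k + entropyVars g R k) / 2) ⬝ᵥ F
    + amean Phi L R * amean (fun U => U.h * U.Bx) L R
    - amean (psi1 g) L R
    + g * amean (fun U => U.h * U.vx) L R * amean (fun U => U.b) L R
    - g * amean (fun U => U.h * U.b * U.vx) L R

/-- Conservative variables `U = (h, h vx, h vy, h Bx, h By)`. -/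
def consVar (U : SWState) : Fin 5 → ℝ :=
  ![U.h, U.h * U.vx, U.h * U.vy, U.h * U.Bx, U.h * U.By]

/-- The source vector `Ψ = (0,0,0,vx,vy)`. -/
def PsiVec (U : SWState) : Fin 5 → ℝ := ![0, 0, 0, U.vx, U.vy]

/-- The bottom-topography source vector `G₁ = (0, g h, 0, 0, 0)`. -/
def G1Vec (g : ℝ) (U : SWState) : Fin 5 → ℝ := ![0, g * U.h, 0, 0, 0]

/-- The mathematical entropy (total energy). -/
def entropyFn (g : ℝ) (U : SWState) : ℝ :=
  U.h * (U.vx ^ 2 + U.vy ^ 2 + U.Bx ^ 2 + U.By ^ 2) / 2 + g * U.h ^ 2 / 2 + g * U.h * U.b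

end SWMHD

open SWMHD

theorem ec_aux (g : ℝ) (L R : SWState) : ecCondition g (ecFlux g L R) L R := by
  simp only [ecCondition, vjump, entropyVars, ecFlux, dotProduct, Fin.sum_univ_five,
    amean, ajump, psi1, Phi]
  simp
  ring

/-- entropy stability of the EC flux with a symmetric positive
semi-definite dissipation matrix `D`:  the dissipative flux
`F̂ = F̃₁(L,R) − ½ D [V]` satisfies
`[V]·F̂ − [ψ₁] + [Φ]⟨hBx⟩ − g[h b vx] + g[h vx]⟨b⟩ = −½ [V]ᵀ D [V] ≤ 0`. -/
theorem es_with_psd_dissipation (g : ℝ) (D : Matrix (Fin 5) (Fin 5) ℝ)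
    (hD : D.PosSemidef) (L R : SWState) :
    (vjump g L R ⬝ᵥ (fun k => ecFlux g L R k - (1 / 2) * D.mulVec (vjump g L R) k)
        - ajump (psi1 g) L R
        + ajump Phi L R * amean (fun U => U.h * U.Bx) L R
        - g * ajump (fun U => U.h * U.b * U.vx) L R
        + g * ajump (fun U => U.h * U.vx) L R * amean (fun U => U.b) L R
      = -(1 / 2) * (vjump g L R ⬝ᵥ D.mulVec (vjump g L R)))
    ∧ -(1 / 2) * (vjump g L R ⬝ᵥ D.mulVec (vjump g L R)) ≤ 0 := by
  have h := ec_aux g L R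
  have hs : vjump g L R ⬝ᵥ (fun k => ecFlux g L R k - (1 / 2) * D.mulVec (vjump g L R) k)
      = vjump g L R ⬝ᵥ ecFlux g L R - (1 / 2) * (vjump g L R ⬝ᵥ D.mulVec (vjump g L R)) := by
    simp only [dotProduct, Fin.sum_univ_five]
    ring
  have hp := hD.dotProduct_mulVec_nonneg (vjump g L R)
  rw [star_trivial] at hp
  unfold ecCondition at h
  constructor
  · rw [hs, h]
    ring
  · linarith
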